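/- Let q ≥ 2 and let x ∈ ℝ^d with ‖x‖ = 1. If W is a (q−1)×d random matrix with i.i.d. standard Gaussian entries, then for every u ∈ ℝ^d, E_W ⟨s_{Q_W(x)}, W u⟩ = λ(q) ⟨x, u⟩. -/

import Mathlib

open MeasureTheory ProbabilityTheory
open scoped RealInnerProductSpace ENNReal Pointwise

/-- The standard Gaussian measure on `EuclideanSpace ℝ (Fin n)`. -/
noncomputable def stdGaussian (n : ℕ) : Measure (EuclideanSpace ℝ (Fin n)) :=
  (Measure.pi fun _ : Fin n => gaussianReal 0 1).map
    (EuclideanSpace.equiv (Fin n) ℝ).symm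

/-- The law of an `n × d` random matrix with i.i.d. standard Gaussian entries. -/
noncomputable def stdGaussianMatrix (n d : ℕ) : Measure (Fin n → Fin d → ℝ) :=
  Measure.pi fun _ : Fin n => Measure.pi fun _ : Fin d => gaussianReal 0 1

/-- Action of a matrix (given as `Fin n → Fin d → ℝ`) on a vector of `EuclideanSpace ℝ (Fin d)`,
producing a vector in `EuclideanSpace ℝ (Fin n)`. -/
noncomputable def act {n d : ℕ} (W : Fin n → Fin d → ℝ) (x : EuclideanSpace ℝ (Fin d)) :
    EuclideanSpace ℝ (Fin n) :=
  (EuclideanSpace.equiv (Fin n) ℝ).symm (fun k => ∑ j, W k j * x j)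

/-- A simplex coding: `q` unit vectors in `ℝ^{q-1}` with pairwise inner products `-1/(q-1)`
summing to zero. -/
def IsSimplexCoding {q : ℕ} (s : Fin q → EuclideanSpace ℝ (Fin (q - 1))) : Prop :=
  (∀ j, ‖s j‖ = 1) ∧ (∀ i j, i ≠ j → ⟪s i, s j⟫ = -(1 / ((q : ℝ) - 1))) ∧ (∑ j, s j = 0)

/-- The Gaussian mean width of a set `K ⊆ ℝ^d`. -/
noncomputable def meanWidth {d : ℕ} (K : Set (EuclideanSpace ℝ (Fin d))) : ℝ :=
  ∫ g, sSup ((fun z => ⟪g, z⟫) '' (K - K)) ∂(stdGaussian d)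

/-- `λ(q) = E max_j ⟨s_j, g⟩` for a standard Gaussian `g` in `ℝ^{q-1}`. -/
noncomputable def lambdaQ {q : ℕ} (s : Fin q → EuclideanSpace ℝ (Fin (q - 1))) : ℝ :=
  ∫ g, (⨆ j, ⟪s j, g⟫) ∂(stdGaussian (q - 1))

lemma row_law {d : ℕ} (y : EuclideanSpace ℝ (Fin d)) :
    (Measure.pi fun _ : Fin d => gaussianReal 0 1).map (fun w => ∑ j, w j * y j)
      = (gaussianReal 0 1).map (fun t => ‖y‖ * t) := by
  have h1 : (fun w : Fin d → ℝ => ∑ j, w j * y j)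
      = (fun z : EuclideanSpace ℝ (Fin d) => ⟪z, y⟫) ∘ (WithLp.toLp 2) := by
    ext w
    simp [PiLp.inner_apply, mul_comm]
  rw [h1, ← Measure.map_map (by fun_prop) (by fun_prop), map_pi_eq_stdGaussian,
    gaussianReal_map_const_mul]
  apply Measure.ext_of_charFun
  ext t
  rw [charFun_gaussianReal, charFun_apply, integral_map (by fun_prop) (by fun_prop)]
  have h2 := charFun_stdGaussian (t • y)
  rw [charFun_apply] at h2
  have h3 : ∀ z : EuclideanSpace ℝ (Fin d), ⟪⟪z, y⟫, t⟫ = ⟪z, t • y⟫ := by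
    intro z
    rw [real_inner_smul_right]
    simp
  simp_rw [h3]
  rw [h2, norm_smul]
  congr 1
  simp only [mul_pow, Complex.ofReal_mul, Real.norm_eq_abs]
  rw [← Complex.ofReal_pow |t|, sq_abs]
  simp
  ring

lemma measurable_act {n d : ℕ} (y : EuclideanSpace ℝ (Fin d)) :
    Measurable (fun W : Fin n → Fin d → ℝ => act W y) := by
  unfold act
  exact (EuclideanSpace.equiv (Fin n) ℝ).symm.continuous.measurable.comp (by fun_prop)

lemma act_law {n d : ℕ} (y : EuclideanSpace ℝ (Fin d)) :
    (stdGaussianMatrix n d).map (fun W => act W y)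
      = (stdGaussian n).map (fun g => ‖y‖ • g) := by
  have hm : Measurable (EuclideanSpace.equiv (Fin n) ℝ).symm :=
    (EuclideanSpace.equiv (Fin n) ℝ).symm.continuous.measurable
  have h1 : (fun W : Fin n → Fin d → ℝ => act W y) =
      (EuclideanSpace.equiv (Fin n) ℝ).symm ∘ (fun W k => (fun w : Fin d → ℝ => ∑ j, w j * y j) (W k)) := rfl
  have h2 : (fun g : EuclideanSpace ℝ (Fin n) => ‖y‖ • g) ∘ (EuclideanSpace.equiv (Fin n) ℝ).symm
     = (EuclideanSpace.equiv (Fin n) ℝ).symm ∘ (fun g k => (fun t : ℝ => ‖y‖ * t) (g k)) := by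
    ext g k
    simp
  have hp : IsProbabilityMeasure ((Measure.pi fun _ : Fin d => gaussianReal 0 1).map (fun w => ∑ j, w j * y j)) :=
    Measure.isProbabilityMeasure_map (Measurable.aemeasurable (by fun_prop))
  have hp' : IsProbabilityMeasure ((gaussianReal 0 1).map (fun t => ‖y‖ * t)) :=
    Measure.isProbabilityMeasure_map (by fun_prop)
  unfold stdGaussianMatrix _root_.stdGaussian
  rw [Measure.map_map (by fun_prop) hm, h1, h2, ← Measure.map_map hm (by fun_prop),
    ← Measure.map_map hm (by fun_prop)]
  have e1 := Measure.pi_map_pi (ι := Fin n) (μ := fun _ => Measure.pi fun _ : Fin d => gaussianReal 0 1)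
    (f := fun _ (w : Fin d → ℝ) => ∑ j, w j * y j) (hμ := fun _ => inferInstance)
    (fun _ => Measurable.aemeasurable (by fun_prop))
  have e2 := Measure.pi_map_pi (ι := Fin n) (μ := fun _ => gaussianReal 0 1)
    (f := fun _ (t : ℝ) => ‖y‖ * t) (hμ := fun _ => inferInstance)
    (fun _ => Measurable.aemeasurable (by fun_prop))
  refine congrArg _ (e1.trans (Eq.trans ?_ e2.symm))
  simp_rw [row_law]

instance (n d : ℕ) : IsProbabilityMeasure (stdGaussianMatrix n d) := by
  unfold stdGaussianMatrix; infer_instance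

lemma stdGaussian_eq (n : ℕ) :
    stdGaussian n = ProbabilityTheory.stdGaussian (EuclideanSpace ℝ (Fin n)) :=
  map_pi_eq_stdGaussian

lemma integrable_std (n : ℕ) : Integrable (fun g : EuclideanSpace ℝ (Fin n) => g) (stdGaussian n) := by
  rw [stdGaussian_eq]
  exact IsGaussian.integrable_fun_id

lemma integrable_act {n d : ℕ} (y : EuclideanSpace ℝ (Fin d)) :
    Integrable (fun W => act W y) (stdGaussianMatrix n d) := by
  have h : Integrable (fun g : EuclideanSpace ℝ (Fin n) => g)
      ((stdGaussianMatrix n d).map (fun W => act W y)) := by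
    rw [act_law, integrable_map_measure (by fun_prop) (by fun_prop)]
    exact (integrable_std n).smul ‖y‖
  exact h.comp_measurable (measurable_act y)

lemma act_add_smul {n d : ℕ} (W : Fin n → Fin d → ℝ) (x u : EuclideanSpace ℝ (Fin d)) (t : ℝ) :
    act W (x + t • u) = act W x + t • act W u := by
  ext k
  simp [act, mul_add, Finset.sum_add_distrib, Finset.mul_sum]
  exact Finset.sum_congr rfl fun _ _ => by ring

section
variable {q n : ℕ} (s : Fin q → EuclideanSpace ℝ (Fin n))

lemma measurable_sup : Measurable (fun g => ⨆ j, ⟪s j, g⟫) :=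
  Measurable.iSup fun j => by fun_prop

lemma le_sup (g : EuclideanSpace ℝ (Fin n)) (j : Fin q) : ⟪s j, g⟫ ≤ ⨆ j, ⟪s j, g⟫ :=
  le_ciSup (f := fun j => ⟪s j, g⟫) (Set.finite_range _).bddAbove j

lemma integral_sup_act {d : ℕ} (y : EuclideanSpace ℝ (Fin d)) :
    ∫ W, (⨆ j, ⟪s j, act W y⟫) ∂(stdGaussianMatrix n d)
      = ‖y‖ * ∫ g, (⨆ j, ⟪s j, g⟫) ∂(stdGaussian n) := by
  rw [← integral_map (φ := fun W => act W y) (f := fun g => ⨆ j, ⟪s j, g⟫)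
    (measurable_act y).aemeasurable
    (measurable_sup s).aestronglyMeasurable, act_law, integral_map (by fun_prop)
    (measurable_sup s).aestronglyMeasurable, ← integral_const_mul]
  congr 1
  ext g
  simp_rw [real_inner_smul_right]
  exact (Real.mul_iSup_of_nonneg (norm_nonneg y) _).symm

lemma integrable_sup_act (hs : ∀ j, ‖s j‖ = 1) (hq : 0 < q) {d : ℕ} (y : EuclideanSpace ℝ (Fin d)) :
    Integrable (fun W => ⨆ j, ⟪s j, act W y⟫) (stdGaussianMatrix n d) := by
  have : Nonempty (Fin q) := ⟨⟨0, hq⟩⟩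
  refine (integrable_act y).norm.mono'
    ((measurable_sup s).comp (measurable_act y)).aestronglyMeasurable (ae_of_all _ fun W => ?_)
  have hb : ∀ j, |⟪s j, act W y⟫| ≤ ‖act W y‖ := fun j => by
    simpa [hs j] using abs_real_inner_le_norm (s j) (act W y)
  rw [Real.norm_eq_abs, abs_le]
  exact ⟨(neg_le_of_abs_le (hb ⟨0, hq⟩)).trans (le_sup s _ _),
    ciSup_le fun j => le_of_abs_le (hb j)⟩

end

/-- For `‖x‖ = 1` and a Gaussian random matrix `W`,
`E_W ⟪s (Q_W x), W u⟫ = λ(q) ⟪x, u⟫` for every `u`. -/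
theorem qary_expected_objective
    (q d : ℕ) (hq : 2 ≤ q)
    (s : Fin q → EuclideanSpace ℝ (Fin (q - 1))) (hs : IsSimplexCoding s)
    (x : EuclideanSpace ℝ (Fin d)) (hx : ‖x‖ = 1)
    (Q : (Fin (q - 1) → Fin d → ℝ) → Fin q) (hQmeas : Measurable Q)
    (hQ : ∀ W j, ⟪s j, act W x⟫ ≤ ⟪s (Q W), act W x⟫)
    (u : EuclideanSpace ℝ (Fin d)) :
    ∫ W, ⟪s (Q W), act W u⟫ ∂(stdGaussianMatrix (q - 1) d) = lambdaQ s * ⟪x, u⟫ := by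
  have : Nonempty (Fin q) := ⟨⟨0, by omega⟩⟩
  have hsQ : Measurable (fun W => s (Q W)) := (measurable_of_countable s).comp hQmeas
  have hint : Integrable (fun W => ⟪s (Q W), act W u⟫) (stdGaussianMatrix (q - 1) d) := by
    refine (integrable_act u).norm.mono'
      (hsQ.inner (measurable_act u)).aestronglyMeasurable (ae_of_all _ fun W => ?_)
    simpa [hs.1] using abs_real_inner_le_norm (s (Q W)) (act W u)
  set I := ∫ W, ⟪s (Q W), act W u⟫ ∂(stdGaussianMatrix (q - 1) d) with hI
  have hS := integrable_sup_act s hs.1 (by omega) (d := d)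
  have key : ∀ t : ℝ, lambdaQ s + t * I ≤ ‖x + t • u‖ * lambdaQ s := by
    intro t
    have h1 : lambdaQ s = ∫ W, (⨆ j, ⟪s j, act W x⟫) ∂(stdGaussianMatrix (q - 1) d) := by
      rw [integral_sup_act, hx, one_mul, lambdaQ]
    have h2 : ‖x + t • u‖ * lambdaQ s
        = ∫ W, (⨆ j, ⟪s j, act W (x + t • u)⟫) ∂(stdGaussianMatrix (q - 1) d) := by
      rw [integral_sup_act, lambdaQ]
    rw [h2, h1, hI, ← integral_const_mul, ← integral_add (hS x) (hint.const_mul t)]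
    refine integral_mono ((hS x).add (hint.const_mul t)) (hS _) fun W => ?_
    have h3 : (⨆ j, ⟪s j, act W x⟫) ≤ ⟪s (Q W), act W x⟫ := ciSup_le (hQ W)
    have h4 := le_sup s (act W (x + t • u)) (Q W)
    rw [act_add_smul, inner_add_right, real_inner_smul_right, ← act_add_smul] at h4
    change (⨆ j, ⟪s j, act W x⟫) + t * ⟪s (Q W), act W u⟫ ≤ _
    linarith
  have hd : HasDerivAt (fun t : ℝ => ‖x + t • u‖) ⟪x, u⟫ 0 := by
    have h1 : HasDerivAt (fun t : ℝ => x + t • u) u 0 := by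
      simpa using ((hasDerivAt_id (0 : ℝ)).smul_const u).const_add x
    have h2 := (h1.norm_sq).sqrt (by simp [hx])
    simpa [Real.sqrt_sq, hx] using h2
  have hd2 : HasDerivAt (fun t : ℝ => ‖x + t • u‖ * lambdaQ s - t * I)
      (⟪x, u⟫ * lambdaQ s - 1 * I) 0 :=
    (hd.mul_const _).sub ((hasDerivAt_id (0 : ℝ)).mul_const I)
  have hmin : IsLocalMin (fun t : ℝ => ‖x + t • u‖ * lambdaQ s - t * I) 0 := by
    refine Filter.Eventually.of_forall fun t => ?_
    have := key t
    simp only [zero_smul, add_zero, hx, one_mul, zero_mul, sub_zero]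
    linarith
  have := hmin.hasDerivAt_eq_zero hd2
  linarith
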